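/- Let W be a graphon, let φ = (φ_t)_{t=0}^L be an L-layer MPNN model, and let ψ : ℝ^{d_L} → ℝ^d be continuous. Then the graphon-level MPNN output equals the MPNN output on the distribution of iterated degree measures of W: h_W = h_{ν_{W,L}}. -/

import Mathlib

open MeasureTheory Set

noncomputable section

/-- Borel measures of total mass at most one on `X`. -/
abbrev SubProb (X : Type) [MeasurableSpace X] : Type :=
  {μ : Measure X // μ Set.univ ≤ 1}

/-- The weak topology on `SubProb X`: the coarsest topology making all maps
`μ ↦ ∫ f dμ` for bounded continuous `f` continuous. -/
def subProbWeakTop (X : Type) [MeasurableSpace X] [TopologicalSpace X] :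
    TopologicalSpace (SubProb X) :=
  ⨅ f : BoundedContinuousFunction X ℝ,
    TopologicalSpace.induced (fun μ => ∫ x, f x ∂μ.val) inferInstance

/-- Iterated degree measure spaces with their (weak) topologies:
`M 0` is a one-point space and `M (h+1)` is the space of Borel measures of total
mass at most one on `M h` with the weak topology. -/
def IDM : ℕ → Σ X : Type, TopologicalSpace X
  | 0 => ⟨Unit, inferInstance⟩
  | (h+1) =>
      let p := IDM h
      ⟨@SubProb p.1 (@borel p.1 p.2), @subProbWeakTop p.1 (@borel p.1 p.2) p.2⟩

/-- The space of iterated degree measures of depth `h`. -/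
def M (h : ℕ) : Type := (IDM h).1

instance (h : ℕ) : TopologicalSpace (M h) := (IDM h).2
instance (h : ℕ) : MeasurableSpace (M h) := borel (M h)
instance (h : ℕ) : BorelSpace (M h) := ⟨rfl⟩

def toSub {h : ℕ} (α : M (h+1)) : SubProb (M h) := α
def ofSub {h : ℕ} (μ : SubProb (M h)) : M (h+1) := μ
/-- The underlying measure of an iterated degree measure. -/
def toMeas {h : ℕ} (α : M (h+1)) : Measure (M h) := (toSub α).1

/-- An MPNN model: dimensions `d t`, an initial feature `φ₀ ∈ ℝ^{d 0}`, and
continuous update functions `φ t : ℝ^{d t} → ℝ^{d (t+1)}`. An `L`-layer model uses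
the layers `φ 0, …, φ (L-1)`. -/
structure MPNNModel where
  d : ℕ → ℕ
  φ₀ : EuclideanSpace ℝ (Fin (d 0))
  φ : (t : ℕ) → EuclideanSpace ℝ (Fin (d t)) → EuclideanSpace ℝ (Fin (d (t+1)))
  cont : ∀ t, Continuous (φ t)

/-- MPNN features on iterated degree measures: `h^{(0)}_α = φ₀` and
`h^{(t+1)}_α = φ_t (∫ h^{(t)}_β dα(β))`. -/
def idmFeat (m : MPNNModel) : (t : ℕ) → M t → EuclideanSpace ℝ (Fin (m.d t))
  | 0, _ => m.φ₀
  | (t+1), α => m.φ t (∫ β, idmFeat m t β ∂(toMeas α))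

/-- A graphon: a symmetric measurable kernel `[0,1]² → [0,1]` (here defined on all
of `ℝ²`, with `[0,1]` carrying the Lebesgue measure). -/
structure Graphon where
  W : ℝ → ℝ → ℝ
  symm : ∀ x y, W x y = W y x
  mem : ∀ x y, W x y ∈ Set.Icc (0:ℝ) 1
  meas : Measurable (Function.uncurry W)

/-- MPNN point features on a graphon kernel. -/
def graphonFeat (m : MPNNModel) (W : ℝ → ℝ → ℝ) :
    (t : ℕ) → ℝ → EuclideanSpace ℝ (Fin (m.d t))
  | 0, _ => m.φ₀
  | (t+1), x => m.φ t (∫ y in Set.Icc (0:ℝ) 1, W x y • graphonFeat m W t y)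

/-- The graphon 1-WL maps `i_{W,h} : [0,1] → M h`: `i_{W,h+1}(x)` is the pushforward
along `i_{W,h}` of the measure on `[0,1]` with density `W(x,·)`. -/
def wlMap (W : Graphon) : (h : ℕ) → ℝ → M h
  | 0, _ => ()
  | (h+1), x => ofSub ⟨Measure.map (wlMap W h)
      ((volume.restrict (Set.Icc (0:ℝ) 1)).withDensity fun y =>
        ENNReal.ofReal (W.W x y)), by
      by_cases hf : AEMeasurable (wlMap W h)
          ((volume.restrict (Set.Icc (0:ℝ) 1)).withDensity fun y =>
            ENNReal.ofReal (W.W x y))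
      · rw [Measure.map_apply_of_aemeasurable hf MeasurableSet.univ, Set.preimage_univ,
          withDensity_apply _ MeasurableSet.univ, Measure.restrict_univ]
        calc ∫⁻ y, ENNReal.ofReal (W.W x y) ∂(volume.restrict (Set.Icc (0:ℝ) 1))
            ≤ ∫⁻ _, 1 ∂(volume.restrict (Set.Icc (0:ℝ) 1)) :=
              lintegral_mono fun y => ENNReal.ofReal_le_one.mpr (W.mem x y).2
          _ ≤ 1 := by simp [Real.volume_Icc]
      · rw [Measure.map_of_not_aemeasurable hf]
        simp⟩


/-- The distribution of iterated degree measures `ν_{W,h}` of a graphon. -/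
def nuWh (W : Graphon) (h : ℕ) : Measure (M h) :=
  Measure.map (wlMap W h) (volume.restrict (Set.Icc (0:ℝ) 1))

lemma subProb_isFinite {X : Type} [MeasurableSpace X] (μ : SubProb X) : IsFiniteMeasure μ.val :=
  ⟨lt_of_le_of_lt μ.2 ENNReal.one_lt_top⟩

lemma subProb_continuous_integral {X : Type} [MeasurableSpace X] [TopologicalSpace X]
    (f : BoundedContinuousFunction X ℝ) :
    @Continuous _ _ (subProbWeakTop X) _ (fun μ : SubProb X => ∫ x, f x ∂μ.val) := by
  rw [continuous_iff_le_induced]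
  exact iInf_le _ f

lemma subProb_compact (X : Type) [MeasurableSpace X] [TopologicalSpace X] [BorelSpace X]
    [CompactSpace X] [T2Space X] : @CompactSpace (SubProb X) (subProbWeakTop X) := by
  letI : TopologicalSpace (SubProb X) := subProbWeakTop X
  have hc := isCompact_setOfPred_finiteMeasure_le_of_compactSpace X 1
  rw [isCompact_iff_compactSpace] at hc
  let F : {μ : FiniteMeasure X | μ.mass ≤ 1} → SubProb X := fun μ => ⟨μ.1.1, by
    have h : μ.1.mass ≤ 1 := μ.2
    have h2 : ((μ.1.mass : NNReal) : ENNReal) ≤ 1 := by exact_mod_cast h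
    exact (FiniteMeasure.ennreal_mass (μ := μ.1)).symm.trans_le h2⟩
  have hF : Continuous F := by
    refine continuous_iInf_rng.2 fun f => continuous_induced_rng.2 ?_
    exact (FiniteMeasure.continuous_integral_boundedContinuousFunction f).comp
      continuous_subtype_val
  have hs : Function.Surjective F := by
    intro μ
    haveI := subProb_isFinite μ
    refine ⟨⟨⟨μ.1, inferInstance⟩, ?_⟩, rfl⟩
    let ρ : FiniteMeasure X := ⟨μ.1, inferInstance⟩
    have h1 : ((ρ.mass : NNReal) : ENNReal) ≤ 1 :=
      (FiniteMeasure.ennreal_mass (μ := ρ)).trans_le μ.2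
    have h2 : ρ.mass ≤ 1 := by exact_mod_cast h1
    exact h2
  exact hs.compactSpace hF

lemma subProb_embed (X : Type) [MeasurableSpace X] [TopologicalSpace X] [BorelSpace X]
    [CompactSpace X] [TopologicalSpace.MetrizableSpace X] :
    ∃ g : ℕ → BoundedContinuousFunction X ℝ,
      @Topology.IsClosedEmbedding _ _ (subProbWeakTop X) _
        (fun (μ : SubProb X) (n : ℕ) => ∫ x, g n x ∂μ.val) := by
  letI : TopologicalSpace (SubProb X) := subProbWeakTop X
  haveI : CompactSpace (SubProb X) := subProb_compact X
  letI := TopologicalSpace.metrizableSpaceMetric X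
  haveI : SecondCountableTopology X := inferInstance
  let g := TopologicalSpace.denseSeq C(X, ℝ)
  refine ⟨fun n => BoundedContinuousFunction.mkOfCompact (g n), ?_⟩
  refine Continuous.isClosedEmbedding
    (continuous_pi fun n => subProb_continuous_integral _) ?_
  intro μ ν h
  haveI := subProb_isFinite μ
  haveI := subProb_isFinite ν
  have hcont : ∀ (ρ : Measure X) [IsFiniteMeasure ρ], Continuous fun f : C(X, ℝ) => ∫ x, f x ∂ρ := by
    intro ρ _
    have h1 := (ContinuousMap.toLp (E := ℝ) 1 ρ ℝ).continuous
    have h2 := (continuous_integral (μ := ρ) (G := ℝ)).comp h1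
    refine h2.congr fun f => ?_
    exact integral_congr_ae (ContinuousMap.coeFn_toLp ρ f)
  have key := (TopologicalSpace.denseRange_denseSeq C(X, ℝ)).equalizer (hcont μ.1) (hcont ν.1)
    (funext fun n => congrFun h n)
  apply Subtype.ext
  refine ext_of_forall_integral_eq_of_IsFiniteMeasure fun f => ?_
  exact congrFun key f.toContinuousMap

lemma M_good (h : ℕ) : CompactSpace (M h) ∧ TopologicalSpace.MetrizableSpace (M h) := by
  induction h with
  | zero =>
    exact ⟨inferInstanceAs (CompactSpace Unit),
      inferInstanceAs (TopologicalSpace.MetrizableSpace Unit)⟩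
  | succ h ih =>
    obtain ⟨_, _⟩ := ih
    refine ⟨subProb_compact (M h), ?_⟩
    obtain ⟨g, hg⟩ := subProb_embed (M h)
    letI : TopologicalSpace (SubProb (M h)) := subProbWeakTop (M h)
    exact @Topology.IsEmbedding.metrizableSpace _ _ (subProbWeakTop (M h)) _ _ _ hg.isEmbedding

instance (h : ℕ) : CompactSpace (M h) := (M_good h).1
instance (h : ℕ) : TopologicalSpace.MetrizableSpace (M h) := (M_good h).2

instance (h : ℕ) (α : M (h+1)) : IsFiniteMeasure (toMeas α) := subProb_isFinite (toSub α)

lemma M_embed (h : ℕ) : ∃ g : ℕ → BoundedContinuousFunction (M h) ℝ,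
    Topology.IsClosedEmbedding (fun (α : M (h+1)) (n : ℕ) => ∫ x, g n x ∂(toMeas α)) :=
  subProb_embed (M h)

lemma M_continuous_integral {h : ℕ} (f : BoundedContinuousFunction (M h) ℝ) :
    Continuous (fun α : M (h+1) => ∫ x, f x ∂(toMeas α)) :=
  subProb_continuous_integral f

lemma toMeas_wlMap (W : Graphon) (h : ℕ) (x : ℝ) : toMeas (wlMap W (h+1) x) =
    Measure.map (wlMap W h) ((volume.restrict (Set.Icc (0:ℝ) 1)).withDensity fun y =>
        ENNReal.ofReal (W.W x y)) := rfl

lemma wl_integral (W : Graphon) (h : ℕ) (hm : Measurable (wlMap W h)) (x : ℝ)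
    {E : Type*} [NormedAddCommGroup E] [NormedSpace ℝ E]
    (f : M h → E) (hf : StronglyMeasurable f) :
    ∫ β, f β ∂(toMeas (wlMap W (h+1) x)) =
      ∫ y in Set.Icc (0:ℝ) 1, W.W x y • f (wlMap W h y) := by
  have hW : Measurable (fun y => W.W x y) := W.meas.comp measurable_prodMk_left
  rw [toMeas_wlMap, integral_map hm.aemeasurable hf.aestronglyMeasurable,
    integral_withDensity_eq_integral_toReal_smul hW.ennreal_ofReal
      (Filter.Eventually.of_forall fun y => ENNReal.ofReal_lt_top)]
  refine integral_congr_ae (Filter.Eventually.of_forall fun y => ?_)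
  simp only [ENNReal.toReal_ofReal (W.mem x y).1]

lemma wlMap_measurable (W : Graphon) (h : ℕ) : Measurable (wlMap W h) := by
  induction h with
  | zero => exact measurable_const
  | succ h ih =>
    obtain ⟨g, hg⟩ := M_embed h
    rw [← hg.measurableEmbedding.measurable_comp_iff]
    refine measurable_pi_lambda _ fun n => ?_
    have : ∀ x, ∫ β, g n β ∂(toMeas (wlMap W (h+1) x)) =
        ∫ y in Set.Icc (0:ℝ) 1, W.W x y • g n (wlMap W h y) := fun x =>
      wl_integral W h ih x _ (g n).continuous.stronglyMeasurable
    simp only [Function.comp_def, this]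
    refine StronglyMeasurable.measurable ?_
    refine StronglyMeasurable.integral_prod_right'
      (f := fun p : ℝ × ℝ => W.W p.1 p.2 • g n (wlMap W h p.2)) ?_
    refine Measurable.stronglyMeasurable ?_
    exact W.meas.smul (((g n).continuous.measurable.comp ih).comp measurable_snd)

lemma idmFeat_continuous (m : MPNNModel) (t : ℕ) : Continuous (idmFeat m t) := by
  induction t with
  | zero => exact continuous_const
  | succ t ih =>
    refine (m.cont t).comp ?_
    have hc : ∀ i, Continuous fun α : M (t+1) => ∫ β, idmFeat m t β i ∂(toMeas α) := fun i =>
      M_continuous_integral (BoundedContinuousFunction.mkOfCompact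
        ⟨fun β => idmFeat m t β i, (EuclideanSpace.proj (𝕜 := ℝ) i).continuous.comp ih⟩)
    have h2 := (PiLp.continuous_toLp 2 (fun _ : Fin (m.d t) => ℝ)).comp (continuous_pi hc)
    refine h2.congr fun α => ?_
    ext i
    have hi : Integrable (idmFeat m t) (toMeas α) :=
      ih.integrable_of_hasCompactSupport (HasCompactSupport.of_compactSpace _)
    exact (EuclideanSpace.proj (𝕜 := ℝ) i).integral_comp_comm hi

lemma graphonFeat_eq (W : Graphon) (m : MPNNModel) (t : ℕ) (x : ℝ) :
    graphonFeat m W.W t x = idmFeat m t (wlMap W t x) := by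
  induction t generalizing x with
  | zero => rfl
  | succ t ih =>
    simp only [graphonFeat, idmFeat]
    rw [wl_integral W t (wlMap_measurable W t) x _ (idmFeat_continuous m t).stronglyMeasurable]
    simp only [ih]

/-- The graphon-level MPNN output equals the MPNN output on the distribution of
iterated degree measures `ν_{W,L}` of the graphon. -/
theorem graphon_output_eq_didm_output (W : Graphon) (m : MPNNModel) (L dout : ℕ)
    (ψ : EuclideanSpace ℝ (Fin (m.d L)) → EuclideanSpace ℝ (Fin dout))
    (hψ : Continuous ψ) :
    ψ (∫ x in Set.Icc (0:ℝ) 1, graphonFeat m W.W L x) =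
      ψ (∫ α, idmFeat m L α ∂(nuWh W L)) := by
  rw [nuWh, integral_map (wlMap_measurable W L).aemeasurable
    (idmFeat_continuous m L).stronglyMeasurable.aestronglyMeasurable]
  simp only [graphonFeat_eq]

end
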